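/- Every symmetric measure is pseudo symmetric. For every pseudo symmetric measure ξ, the matrix C_{ξ11} is positive definite (hence invertible) and the information matrix satisfies C_{ξ00} − C_{ξ01}C_{ξ11}⁻¹C_{ξ10} = q*_ξ · B_t/(t−1), where q*_ξ = c_{ξ00} − c_{ξ01}²/c_{ξ11}. -/

import Mathlib

open Matrix

namespace TwoDim

/-- The set of plots of an `a × b` block. -/
abbrev Plot (a b : ℕ) := Fin a × Fin b

/-- A block array: an assignment of one of `t` treatments to each plot. -/
abbrev BlockArray (a b t : ℕ) := Plot a b → Fin t

/-- The all-ones matrix. -/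
def Jmat (n : Type*) : Matrix n n ℝ := Matrix.of fun _ _ => 1

/-- `B_m = I - J/m`. -/
noncomputable def Bmat (n : Type*) [Fintype n] [DecidableEq n] : Matrix n n ℝ :=
  1 - ((Fintype.card n : ℝ))⁻¹ • Jmat n

variable {a b t : ℕ}

/-- The treatment incidence matrix `T_s`. -/
def Tmat (s : BlockArray a b t) : Matrix (Plot a b) (Fin t) ℝ :=
  Matrix.of fun q k => if s q = k then 1 else 0

/-- Two plots are neighbors if they agree in one coordinate and differ by 1 in the other. -/
def Neighbor (q r : Plot a b) : Prop :=
  (q.1 = r.1 ∧ (q.2.val + 1 = r.2.val ∨ r.2.val + 1 = q.2.val)) ∨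
  (q.2 = r.2 ∧ (q.1.val + 1 = r.1.val ∨ r.1.val + 1 = q.1.val))

instance (q r : Plot a b) : Decidable (Neighbor q r) := by
  unfold Neighbor; infer_instance

/-- The adjacency matrix of the neighbor relation. -/
def Mmat (a b : ℕ) : Matrix (Plot a b) (Plot a b) ℝ :=
  Matrix.of fun q r => if Neighbor q r then 1 else 0

/-- `F_s = M T_s`. -/
def Fmat (s : BlockArray a b t) : Matrix (Plot a b) (Fin t) ℝ :=
  Mmat a b * Tmat s

/-- `B̃ = Σ⁻¹ − Σ⁻¹ J Σ⁻¹ / (1'Σ⁻¹1)`. -/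
noncomputable def Btilde (Sig : Matrix (Plot a b) (Plot a b) ℝ) :
    Matrix (Plot a b) (Plot a b) ℝ :=
  Sig⁻¹ - (∑ i, ∑ j, Sig⁻¹ i j)⁻¹ • (Sig⁻¹ * Jmat (Plot a b) * Sig⁻¹)

/-- `C_{s00} = T_s' W T_s` (with `W` playing the role of `B̃`). -/
def Cs00 (W : Matrix (Plot a b) (Plot a b) ℝ) (s : BlockArray a b t) :
    Matrix (Fin t) (Fin t) ℝ := (Tmat s)ᵀ * W * Tmat s

/-- `C_{s01} = T_s' W F_s`. -/
def Cs01 (W : Matrix (Plot a b) (Plot a b) ℝ) (s : BlockArray a b t) :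
    Matrix (Fin t) (Fin t) ℝ := (Tmat s)ᵀ * W * Fmat s

/-- `C_{s11} = F_s' W F_s`. -/
def Cs11 (W : Matrix (Plot a b) (Plot a b) ℝ) (s : BlockArray a b t) :
    Matrix (Fin t) (Fin t) ℝ := (Fmat s)ᵀ * W * Fmat s

/-- `c_{s00} = tr(B_t C_{s00})`. -/
noncomputable def cs00 (W : Matrix (Plot a b) (Plot a b) ℝ) (s : BlockArray a b t) : ℝ :=
  Matrix.trace (Bmat (Fin t) * Cs00 W s)

noncomputable def cs01 (W : Matrix (Plot a b) (Plot a b) ℝ) (s : BlockArray a b t) : ℝ :=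
  Matrix.trace (Bmat (Fin t) * Cs01 W s)

noncomputable def cs11 (W : Matrix (Plot a b) (Plot a b) ℝ) (s : BlockArray a b t) : ℝ :=
  Matrix.trace (Bmat (Fin t) * Cs11 W s)

/-- The quadratic `q_s(x) = c_{s00} + 2 c_{s01} x + c_{s11} x²`. -/
noncomputable def qpoly (W : Matrix (Plot a b) (Plot a b) ℝ) (s : BlockArray a b t) (x : ℝ) : ℝ :=
  cs00 W s + 2 * cs01 W s * x + cs11 W s * x ^ 2

/-- A measure on the set of block arrays: nonnegative weights summing to one. -/
def IsMeasure (ξ : BlockArray a b t → ℝ) : Prop :=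
  (∀ s, 0 ≤ ξ s) ∧ ∑ s, ξ s = 1

noncomputable def Cm00 (W : Matrix (Plot a b) (Plot a b) ℝ) (ξ : BlockArray a b t → ℝ) :
    Matrix (Fin t) (Fin t) ℝ := ∑ s, ξ s • Cs00 W s

noncomputable def Cm01 (W : Matrix (Plot a b) (Plot a b) ℝ) (ξ : BlockArray a b t → ℝ) :
    Matrix (Fin t) (Fin t) ℝ := ∑ s, ξ s • Cs01 W s

noncomputable def Cm11 (W : Matrix (Plot a b) (Plot a b) ℝ) (ξ : BlockArray a b t → ℝ) :
    Matrix (Fin t) (Fin t) ℝ := ∑ s, ξ s • Cs11 W s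

noncomputable def cm00 (W : Matrix (Plot a b) (Plot a b) ℝ) (ξ : BlockArray a b t → ℝ) : ℝ :=
  ∑ s, ξ s * cs00 W s

noncomputable def cm01 (W : Matrix (Plot a b) (Plot a b) ℝ) (ξ : BlockArray a b t → ℝ) : ℝ :=
  ∑ s, ξ s * cs01 W s

noncomputable def cm11 (W : Matrix (Plot a b) (Plot a b) ℝ) (ξ : BlockArray a b t → ℝ) : ℝ :=
  ∑ s, ξ s * cs11 W s

/-- `q*_ξ = c_{ξ00} − c_{ξ01}²/c_{ξ11}`. -/
noncomputable def qstar (W : Matrix (Plot a b) (Plot a b) ℝ) (ξ : BlockArray a b t → ℝ) : ℝ :=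
  cm00 W ξ - (cm01 W ξ) ^ 2 / cm11 W ξ

/-- `G` is a generalized inverse of `A`. -/
def IsGenInv (A G : Matrix (Fin t) (Fin t) ℝ) : Prop := A * G * A = A

/-- Information matrix `C_{ξ00} − C_{ξ01} G C_{ξ10}` computed with a generalized inverse `G`. -/
noncomputable def InfoMat (W : Matrix (Plot a b) (Plot a b) ℝ) (ξ : BlockArray a b t → ℝ)
    (G : Matrix (Fin t) (Fin t) ℝ) : Matrix (Fin t) (Fin t) ℝ :=
  Cm00 W ξ - Cm01 W ξ * G * (Cm01 W ξ)ᵀ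

/-- A criterion `Φ` on `t×t` real symmetric matrices: concave, Loewner-nondecreasing, and
invariant under simultaneous permutations of rows and columns. -/
def GoodPhi (t : ℕ) (Φ : Matrix (Fin t) (Fin t) ℝ → ℝ) : Prop :=
  (∀ A B : Matrix (Fin t) (Fin t) ℝ, A.IsSymm → B.IsSymm → ∀ α : ℝ, 0 ≤ α → α ≤ 1 →
      α * Φ A + (1 - α) * Φ B ≤ Φ (α • A + (1 - α) • B)) ∧
  (∀ A B : Matrix (Fin t) (Fin t) ℝ, A.IsSymm → B.IsSymm → (B - A).PosSemidef → Φ A ≤ Φ B) ∧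
  (∀ (σ : Equiv.Perm (Fin t)) (C : Matrix (Fin t) (Fin t) ℝ), Φ (C.submatrix σ σ) = Φ C)

/-- Universal optimality of a measure `ξ`. -/
def UnivOptimal (W : Matrix (Plot a b) (Plot a b) ℝ) (ξ : BlockArray a b t → ℝ) : Prop :=
  ∀ η : BlockArray a b t → ℝ, IsMeasure η →
    ∀ G H : Matrix (Fin t) (Fin t) ℝ, IsGenInv (Cm11 W ξ) G → IsGenInv (Cm11 W η) H →
      ∀ Φ : Matrix (Fin t) (Fin t) ℝ → ℝ, GoodPhi t Φ →
        Φ (InfoMat W η H) ≤ Φ (InfoMat W ξ G)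

/-- A measure is symmetric if it is invariant under relabeling of the treatments. -/
def IsSymmetricMeasure (ξ : BlockArray a b t → ℝ) : Prop :=
  ∀ (σ : Equiv.Perm (Fin t)) (s : BlockArray a b t), ξ (fun q => σ (s q)) = ξ s

/-- A matrix is completely symmetric if it is of the form `αI + βJ`. -/
def ComplSym (A : Matrix (Fin t) (Fin t) ℝ) : Prop :=
  ∃ α β : ℝ, A = α • (1 : Matrix (Fin t) (Fin t) ℝ) + β • Jmat (Fin t)

/-- A measure is pseudo symmetric if `C_{ξ00}`, `C_{ξ01}`, `C_{ξ11}` are completely symmetric. -/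
def PseudoSym (W : Matrix (Plot a b) (Plot a b) ℝ) (ξ : BlockArray a b t → ℝ) : Prop :=
  ComplSym (Cm00 W ξ) ∧ ComplSym (Cm01 W ξ) ∧ ComplSym (Cm11 W ξ)

/-- `r(x) = max_{s∈S} q_s(x)`. -/
noncomputable def rfun {a b : ℕ} (t : ℕ) (W : Matrix (Plot a b) (Plot a b) ℝ) (x : ℝ) : ℝ :=
  sSup (Set.range fun s : BlockArray a b t => qpoly W s x)

/-- `min_{s∈S} q_s(x)`. -/
noncomputable def rmin {a b : ℕ} (t : ℕ) (W : Matrix (Plot a b) (Plot a b) ℝ) (x : ℝ) : ℝ :=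
  sInf (Set.range fun s : BlockArray a b t => qpoly W s x)

/-- Number of plots assigned treatment `k` by `s`. -/
noncomputable def f0 (s : BlockArray a b t) (k : Fin t) : ℕ :=
  {q : Plot a b | s q = k}.ncard

/-- Replications of `k` among the columns `1,…,b−1`. -/
noncomputable def f1 (s : BlockArray a b t) (k : Fin t) : ℕ :=
  {q : Plot a b | s q = k ∧ q.2.val + 1 < b}.ncard

/-- Replications of `k` among the columns `2,…,b`. -/
noncomputable def f2 (s : BlockArray a b t) (k : Fin t) : ℕ :=
  {q : Plot a b | s q = k ∧ 1 ≤ q.2.val}.ncard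

/-- Replications of `k` among the rows `1,…,a−1`. -/
noncomputable def f3 (s : BlockArray a b t) (k : Fin t) : ℕ :=
  {q : Plot a b | s q = k ∧ q.1.val + 1 < a}.ncard

/-- Replications of `k` among the rows `2,…,a`. -/
noncomputable def f4 (s : BlockArray a b t) (k : Fin t) : ℕ :=
  {q : Plot a b | s q = k ∧ 1 ≤ q.1.val}.ncard

noncomputable def fc (s : BlockArray a b t) : ℕ → Fin t → ℕ
  | 0 => f0 s
  | 1 => f1 s
  | 2 => f2 s
  | 3 => f3 s
  | 4 => f4 s
  | _ => fun _ => 0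

/-- `h^{uv}_s = Σ_k f^u_{s,k} f^v_{s,k}`. -/
noncomputable def hval (s : BlockArray a b t) (u v : ℕ) : ℝ :=
  ∑ k : Fin t, (fc s u k : ℝ) * (fc s v k : ℝ)

noncomputable def h00 (s : BlockArray a b t) : ℝ := hval s 0 0

noncomputable def h1 (s : BlockArray a b t) : ℝ :=
  hval s 0 1 + hval s 0 2 + hval s 0 3 + hval s 0 4

noncomputable def h2 (s : BlockArray a b t) : ℝ :=
  hval s 1 1 + hval s 2 2 + hval s 3 3 + hval s 4 4

noncomputable def h3 (s : BlockArray a b t) : ℝ :=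
  hval s 1 2 + hval s 1 3 + hval s 1 4 + hval s 2 3 + hval s 2 4 + hval s 3 4

/-- `z¹_{s,r}`: horizontally adjacent pairs of plots receiving the same treatment. -/
noncomputable def zr1 (s : BlockArray a b t) : ℕ :=
  {qr : Plot a b × Plot a b |
    qr.1.1 = qr.2.1 ∧ qr.1.2.val + 1 = qr.2.2.val ∧ s qr.1 = s qr.2}.ncard

noncomputable def zr2 (s : BlockArray a b t) : ℕ :=
  {qr : Plot a b × Plot a b |
    qr.1.1 = qr.2.1 ∧ qr.1.2.val + 2 = qr.2.2.val ∧ s qr.1 = s qr.2}.ncard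

noncomputable def zc1 (s : BlockArray a b t) : ℕ :=
  {qr : Plot a b × Plot a b |
    qr.1.2 = qr.2.2 ∧ qr.1.1.val + 1 = qr.2.1.val ∧ s qr.1 = s qr.2}.ncard

noncomputable def zc2 (s : BlockArray a b t) : ℕ :=
  {qr : Plot a b × Plot a b |
    qr.1.2 = qr.2.2 ∧ qr.1.1.val + 2 = qr.2.1.val ∧ s qr.1 = s qr.2}.ncard

/-- pairs `(i,j)`, `(i−1,j+1)` with the same treatment. -/
noncomputable def zd1 (s : BlockArray a b t) : ℕ :=
  {qr : Plot a b × Plot a b |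
    qr.2.1.val + 1 = qr.1.1.val ∧ qr.1.2.val + 1 = qr.2.2.val ∧ s qr.1 = s qr.2}.ncard

/-- pairs `(i,j)`, `(i+1,j+1)` with the same treatment. -/
noncomputable def zd2 (s : BlockArray a b t) : ℕ :=
  {qr : Plot a b × Plot a b |
    qr.1.1.val + 1 = qr.2.1.val ∧ qr.1.2.val + 1 = qr.2.2.val ∧ s qr.1 = s qr.2}.ncard

noncomputable def z1 (s : BlockArray a b t) : ℝ := 2 * zr1 s + 2 * zc1 s

noncomputable def z2 (s : BlockArray a b t) : ℝ :=
  2 * zr2 s + 2 * zc2 s + 4 * zd1 s + 4 * zd2 s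

/-- `η = 4p − 2a − 2b − 2(8ab − 7a − 7b + 4)/t + 4(2p − a − b)²/(pt)` where `p = ab`. -/
noncomputable def eta (a b t : ℕ) : ℝ :=
  4 * ((a : ℝ) * b) - 2 * a - 2 * b - 2 * (8 * (a : ℝ) * b - 7 * a - 7 * b + 4) / t +
    4 * (2 * (a : ℝ) * b - a - b) ^ 2 / (((a : ℝ) * b) * t)

/-- A corner plot of the `a × b` block. -/
def IsCorner (q : Plot a b) : Prop :=
  (q.1.val = 0 ∨ q.1.val + 1 = a) ∧ (q.2.val = 0 ∨ q.2.val + 1 = b)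

/-- Treatment `k` is significant in `s`: it occupies exactly two plots, which are
neighbors, at least one of them being a corner plot. -/
def Significant (s : BlockArray a b t) (k : Fin t) : Prop :=
  ∃ u v : Plot a b, u ≠ v ∧ {q : Plot a b | s q = k} = {u, v} ∧
    Neighbor u v ∧ (IsCorner u ∨ IsCorner v)

/-- Treatment `k` is strictly significant in `s`: both of its two plots are corners. -/
def StrictSignificant (s : BlockArray a b t) (k : Fin t) : Prop :=
  ∃ u v : Plot a b, u ≠ v ∧ {q : Plot a b | s q = k} = {u, v} ∧
    Neighbor u v ∧ IsCorner u ∧ IsCorner v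

/-- `Q_i`: block arrays with exactly `i` significant treatments in which every other
treatment appears at most once. -/
def Qset (a b t : ℕ) (i : ℕ) : Set (BlockArray a b t) :=
  {s | {k : Fin t | Significant s k}.ncard = i ∧
       ∀ k : Fin t, ¬ Significant s k → f0 s k ≤ 1}

/-- `Q_j*`: members of `Q_j` whose significant treatments are all strictly significant. -/
def QsetStar (a b t : ℕ) (j : ℕ) : Set (BlockArray a b t) :=
  {s | s ∈ Qset a b t j ∧ ∀ k : Fin t, Significant s k → StrictSignificant s k}

/-- Treatment `k` is connected in `s`. -/
def ConnectedIn (s : BlockArray a b t) (k : Fin t) : Prop :=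
  ∀ q r : Plot a b, s q = k → s r = k →
    Relation.ReflTransGen (fun u v => Neighbor u v ∧ s u = k ∧ s v = k) q r

/-! ### Helper lemmas -/

lemma Tmat_perm (σ : Equiv.Perm (Fin t)) (s : BlockArray a b t) (q : Plot a b) (k : Fin t) :
    Tmat (fun q => σ (s q)) q (σ k) = Tmat s q k := by
  simp [Tmat]

lemma Fmat_perm (σ : Equiv.Perm (Fin t)) (s : BlockArray a b t) (q : Plot a b) (k : Fin t) :
    Fmat (fun q => σ (s q)) q (σ k) = Fmat s q k := by
  simp only [Fmat, Matrix.mul_apply, Tmat_perm]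

lemma complSym_of_perm (ht : 2 ≤ t) (A : Matrix (Fin t) (Fin t) ℝ)
    (h : ∀ (σ : Equiv.Perm (Fin t)) k l, A (σ k) (σ l) = A k l) : ComplSym A := by
  let z : Fin t := ⟨0, by omega⟩
  let o : Fin t := ⟨1, by omega⟩
  have hzo : z ≠ o := by simp [z, o]
  have hd : ∀ k, A k k = A z z := fun k => by
    have := h (Equiv.swap z k) z z
    simpa using this
  have h1 : ∀ l, l ≠ z → A z l = A z o := fun l hl => by
    have := h (Equiv.swap o l) z o
    rwa [Equiv.swap_apply_of_ne_of_ne hzo hl.symm, Equiv.swap_apply_left] at this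
  have h2 : ∀ k l, k ≠ l → A k l = A z o := fun k l hkl => by
    have := h (Equiv.swap z k) k l
    rw [Equiv.swap_apply_right] at this
    rw [← this]
    apply h1
    intro hc
    apply hkl
    have := congrArg (Equiv.swap z k) hc
    simpa using this.symm
  refine ⟨A z z - A z o, A z o, ?_⟩
  ext k l
  by_cases hkl : k = l
  · subst hkl
    simp [Jmat, hd k]
  · simp [Jmat, hkl, h2 k l hkl]

lemma complSym_mix (ht : 2 ≤ t) (W : Matrix (Plot a b) (Plot a b) ℝ)
    (X Y : BlockArray a b t → Matrix (Plot a b) (Fin t) ℝ)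
    (hX : ∀ (σ : Equiv.Perm (Fin t)) s q k, X (fun q => σ (s q)) q (σ k) = X s q k)
    (hY : ∀ (σ : Equiv.Perm (Fin t)) s q k, Y (fun q => σ (s q)) q (σ k) = Y s q k)
    (ξ : BlockArray a b t → ℝ) (hξ : IsSymmetricMeasure ξ) :
    ComplSym (∑ s, ξ s • ((X s)ᵀ * W * Y s)) := by
  apply complSym_of_perm ht
  intro σ k l
  simp only [Matrix.sum_apply, Matrix.smul_apply]
  rw [← Equiv.sum_comp (Equiv.arrowCongr (Equiv.refl (Plot a b)) σ)]
  refine Finset.sum_congr rfl fun s _ => ?_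
  have e : (Equiv.arrowCongr (Equiv.refl (Plot a b)) σ) s = fun q => σ (s q) := rfl
  rw [e, hξ]
  simp only [Matrix.mul_apply, Matrix.transpose_apply, hX, hY]

/-- the all-ones vector -/
def ov (n : Type*) : n → ℝ := fun _ => 1

lemma Jmat_mulVec {n : Type*} [Fintype n] (x : n → ℝ) :
    Jmat n *ᵥ x = (ov n ⬝ᵥ x) • ov n := by
  ext i; simp [Jmat, ov, Matrix.mulVec, dotProduct]

lemma Btilde_mulVec (Sig : Matrix (Plot a b) (Plot a b) ℝ) (x : Plot a b → ℝ) :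
    Btilde Sig *ᵥ x = Sig⁻¹ *ᵥ x -
      ((ov _ ⬝ᵥ Sig⁻¹ *ᵥ ov _)⁻¹ * (ov _ ⬝ᵥ Sig⁻¹ *ᵥ x)) • (Sig⁻¹ *ᵥ ov _) := by
  have : (∑ i, ∑ j, Sig⁻¹ i j) = ov _ ⬝ᵥ Sig⁻¹ *ᵥ ov _ := by
    simp [ov, dotProduct, Matrix.mulVec]
  rw [Btilde, this, Matrix.sub_mulVec, Matrix.smul_mulVec, ← Matrix.mulVec_mulVec,
    ← Matrix.mulVec_mulVec, Jmat_mulVec, Matrix.mulVec_smul, smul_smul]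

lemma ov_pos (ha : 2 ≤ a) (hb : 3 ≤ b) {K : Matrix (Plot a b) (Plot a b) ℝ} (hK : K.PosDef) :
    0 < ov _ ⬝ᵥ K *ᵥ ov (Plot a b) := by
  have h0 : ov (Plot a b) ≠ 0 := fun h => by
    have := congrFun h (⟨0, by omega⟩, ⟨0, by omega⟩)
    simp [ov] at this
  simpa using hK.dotProduct_mulVec_pos h0

lemma Btilde_quad (ha : 2 ≤ a) (hb : 3 ≤ b)
    {Sig : Matrix (Plot a b) (Plot a b) ℝ} (hSig : Sig.PosDef) (x : Plot a b → ℝ) :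
    ∃ c : ℝ, x ⬝ᵥ Btilde Sig *ᵥ x = (x - c • ov _) ⬝ᵥ Sig⁻¹ *ᵥ (x - c • ov _) := by
  have hK := hSig.inv
  have hw := ov_pos ha hb hK
  have hs : x ⬝ᵥ Sig⁻¹ *ᵥ ov _ = ov _ ⬝ᵥ Sig⁻¹ *ᵥ x := by
    have hT : (Sig⁻¹)ᵀ = Sig⁻¹ := by
      have := hK.isHermitian
      rwa [Matrix.IsHermitian, Matrix.conjTranspose_eq_transpose_of_trivial] at this
    rw [Matrix.dotProduct_mulVec, ← Matrix.mulVec_transpose, hT, dotProduct_comm]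
  refine ⟨(ov _ ⬝ᵥ Sig⁻¹ *ᵥ ov _)⁻¹ * (ov _ ⬝ᵥ Sig⁻¹ *ᵥ x), ?_⟩
  rw [Btilde_mulVec]
  simp only [Matrix.mulVec_sub, Matrix.mulVec_smul, dotProduct_sub, sub_dotProduct,
    dotProduct_smul, smul_dotProduct, hs, smul_eq_mul]
  field_simp
  ring

lemma Btilde_nonneg (ha : 2 ≤ a) (hb : 3 ≤ b)
    {Sig : Matrix (Plot a b) (Plot a b) ℝ} (hSig : Sig.PosDef) (x : Plot a b → ℝ) :
    0 ≤ x ⬝ᵥ Btilde Sig *ᵥ x := by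
  obtain ⟨c, hc⟩ := Btilde_quad ha hb hSig x
  rw [hc]
  have := hSig.inv.posSemidef.dotProduct_mulVec_nonneg (x - c • ov _)
  rwa [star_trivial] at this

lemma Btilde_pos (ha : 2 ≤ a) (hb : 3 ≤ b)
    {Sig : Matrix (Plot a b) (Plot a b) ℝ} (hSig : Sig.PosDef) (x : Plot a b → ℝ)
    (q r : Plot a b) (hx : x q ≠ x r) :
    0 < x ⬝ᵥ Btilde Sig *ᵥ x := by
  obtain ⟨c, hc⟩ := Btilde_quad ha hb hSig x
  rw [hc]
  have h0 : x - c • ov _ ≠ 0 := fun h => hx <| by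
    have h1 := congrFun h q
    have h2 := congrFun h r
    simp [ov] at h1 h2
    linarith
  simpa using hSig.inv.dotProduct_mulVec_pos h0

lemma Btilde_ov (ha : 2 ≤ a) (hb : 3 ≤ b)
    {Sig : Matrix (Plot a b) (Plot a b) ℝ} (hSig : Sig.PosDef) :
    Btilde Sig *ᵥ ov _ = 0 := by
  have hw := ov_pos ha hb hSig.inv
  rw [Btilde_mulVec, inv_mul_cancel₀ hw.ne', one_smul, sub_self]

lemma ov_Btilde (ha : 2 ≤ a) (hb : 3 ≤ b)
    {Sig : Matrix (Plot a b) (Plot a b) ℝ} (hSig : Sig.PosDef) :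
    ov _ ᵥ* Btilde Sig = 0 := by
  have hT : (Sig⁻¹)ᵀ = Sig⁻¹ := by
    have := hSig.inv.isHermitian
    rwa [Matrix.IsHermitian, Matrix.conjTranspose_eq_transpose_of_trivial] at this
  have hJ : (Jmat (Plot a b))ᵀ = Jmat (Plot a b) := by ext; simp [Jmat]
  have : (Btilde Sig)ᵀ = Btilde Sig := by
    simp [Btilde, Matrix.transpose_mul, hT, hJ, Matrix.mul_assoc]
  rw [← this, Matrix.vecMul_transpose, Btilde_ov ha hb hSig]

lemma Tmat_ov (s : BlockArray a b t) : Tmat s *ᵥ ov _ = ov _ := by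
  ext q; simp [Tmat, ov, Matrix.mulVec, dotProduct]

lemma Fmat_ov (s : BlockArray a b t) : Fmat s *ᵥ ov _ = Mmat a b *ᵥ ov _ := by
  rw [Fmat, ← Matrix.mulVec_mulVec, Tmat_ov]

lemma Fmat_nat (s : BlockArray a b t) (q : Plot a b) (k : Fin t) :
    ∃ n : ℤ, Fmat s q k = n := by
  refine ⟨∑ r, if Neighbor q r ∧ s r = k then 1 else 0, ?_⟩
  simp only [Fmat, Matrix.mul_apply, Mmat, Tmat, Matrix.of_apply]
  push_cast
  refine Finset.sum_congr rfl fun r _ => ?_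
  by_cases h1 : Neighbor q r <;> by_cases h2 : s r = k <;> simp [h1, h2]

lemma deg_corner (ha : 2 ≤ a) (hb : 3 ≤ b) :
    (Mmat a b *ᵥ ov _) (⟨0, by omega⟩, ⟨0, by omega⟩) = 2 := by
  have : (Finset.univ.filter fun r : Plot a b =>
      Neighbor (⟨0, by omega⟩, ⟨0, by omega⟩) r) =
      {(⟨0, by omega⟩, ⟨1, by omega⟩), (⟨1, by omega⟩, ⟨0, by omega⟩)} := by
    ext ⟨⟨i, hi⟩, ⟨j, hj⟩⟩
    simp [Neighbor]
    omega
  simp only [Mmat, ov, Matrix.mulVec, dotProduct, Matrix.of_apply, mul_one]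
  rw [Finset.sum_boole, this, Finset.card_pair (by simp)]
  norm_num

lemma deg_side (ha : 2 ≤ a) (hb : 3 ≤ b) :
    (Mmat a b *ᵥ ov _) (⟨0, by omega⟩, ⟨1, by omega⟩) = 3 := by
  have : (Finset.univ.filter fun r : Plot a b =>
      Neighbor (⟨0, by omega⟩, ⟨1, by omega⟩) r) =
      {(⟨0, by omega⟩, ⟨0, by omega⟩), (⟨0, by omega⟩, ⟨2, by omega⟩),
        (⟨1, by omega⟩, ⟨1, by omega⟩)} := by
    ext ⟨⟨i, hi⟩, ⟨j, hj⟩⟩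
    simp [Neighbor]
    omega
  simp only [Mmat, ov, Matrix.mulVec, dotProduct, Matrix.of_apply, mul_one]
  rw [Finset.sum_boole, this, Finset.card_eq_three.2 ⟨_, _, _, ?_, ?_, ?_, rfl⟩]
  · norm_num
  all_goals simp

lemma mix_mulVec (W : Matrix (Plot a b) (Plot a b) ℝ)
    (X Y : BlockArray a b t → Matrix (Plot a b) (Fin t) ℝ) (ξ : BlockArray a b t → ℝ)
    (u v : Fin t → ℝ) :
    u ⬝ᵥ (∑ s, ξ s • ((X s)ᵀ * W * Y s)) *ᵥ v =
      ∑ s, ξ s * ((X s *ᵥ u) ⬝ᵥ W *ᵥ (Y s *ᵥ v)) := by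
  rw [Matrix.sum_mulVec, dotProduct_sum]
  refine Finset.sum_congr rfl fun s _ => ?_
  rw [Matrix.smul_mulVec, dotProduct_smul, smul_eq_mul, ← Matrix.mulVec_mulVec,
    ← Matrix.mulVec_mulVec, Matrix.dotProduct_mulVec, Matrix.vecMul_transpose]

lemma mix_pos (ha : 2 ≤ a) (hb : 3 ≤ b)
    {Sig : Matrix (Plot a b) (Plot a b) ℝ} (hSig : Sig.PosDef)
    {ξ : BlockArray a b t → ℝ} (hξ : IsMeasure ξ) (v : Fin t → ℝ)
    (h : ∀ s : BlockArray a b t, ∃ q r, (Fmat s *ᵥ v) q ≠ (Fmat s *ᵥ v) r) :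
    0 < v ⬝ᵥ Cm11 (Btilde Sig) ξ *ᵥ v := by
  have e : v ⬝ᵥ Cm11 (Btilde Sig) ξ *ᵥ v = _ := mix_mulVec (Btilde Sig) Fmat Fmat ξ v v
  rw [e]
  have hex : ∃ s, ξ s ≠ 0 := by
    by_contra! hc
    have := hξ.2
    simp [hc] at this
  obtain ⟨s, hs⟩ := hex
  refine Finset.sum_pos' (fun s _ => mul_nonneg (hξ.1 s) (Btilde_nonneg ha hb hSig _))
    ⟨s, Finset.mem_univ _, ?_⟩
  obtain ⟨q, r, hqr⟩ := h s
  exact mul_pos (lt_of_le_of_ne (hξ.1 s) hs.symm) (Btilde_pos ha hb hSig _ q r hqr)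

lemma cs_quad (α β : ℝ) (u v : Fin t → ℝ) :
    u ⬝ᵥ (α • (1 : Matrix (Fin t) (Fin t) ℝ) + β • Jmat (Fin t)) *ᵥ v =
      α * (u ⬝ᵥ v) + β * (ov _ ⬝ᵥ v) * (ov _ ⬝ᵥ u) := by
  rw [Matrix.add_mulVec, Matrix.smul_mulVec, Matrix.smul_mulVec, Jmat_mulVec, Matrix.one_mulVec]
  simp only [dotProduct_add, dotProduct_smul, smul_eq_mul, dotProduct_comm u (ov _)]
  ring

lemma ov_ov : ov (Fin t) ⬝ᵥ ov (Fin t) = t := by simp [ov, dotProduct]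

lemma J_mul_J : Jmat (Fin t) * Jmat (Fin t) = (t : ℝ) • Jmat (Fin t) := by
  ext; simp [Jmat, Matrix.mul_apply]

lemma trace_J : (Jmat (Fin t)).trace = t := by simp [Jmat, Matrix.trace]

lemma Bmat_mul_cs (ht : 2 ≤ t) (α β : ℝ) :
    Bmat (Fin t) * (α • (1 : Matrix (Fin t) (Fin t) ℝ) + β • Jmat (Fin t)) = α • Bmat (Fin t) := by
  have : (t : ℝ) ≠ 0 := by positivity
  simp only [Bmat, Fintype.card_fin, sub_mul, mul_add, Matrix.one_mul, Matrix.smul_mul,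
    Matrix.mul_smul, J_mul_J, Matrix.mul_one, smul_sub, smul_smul]
  rw [inv_mul_cancel₀ this, mul_one, sub_self, add_zero]

lemma trace_Bmat (ht : 2 ≤ t) : (Bmat (Fin t)).trace = (t : ℝ) - 1 := by
  have : (t : ℝ) ≠ 0 := by positivity
  simp [Bmat, trace_J, this]

lemma trace_mix (A : BlockArray a b t → Matrix (Fin t) (Fin t) ℝ) (ξ : BlockArray a b t → ℝ) :
    ∑ s, ξ s * Matrix.trace (Bmat (Fin t) * A s) =
      Matrix.trace (Bmat (Fin t) * ∑ s, ξ s • A s) := by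
  simp [Matrix.mul_sum, Matrix.trace_sum, Matrix.trace_smul]

lemma cs_eq_Bmat (ht : 2 ≤ t) (α β : ℝ) (h : α + t * β = 0) :
    α • (1 : Matrix (Fin t) (Fin t) ℝ) + β • Jmat (Fin t) = α • Bmat (Fin t) := by
  have h0 : (t : ℝ) ≠ 0 := by positivity
  have : β = - (α * (t : ℝ)⁻¹) := by field_simp; linarith
  rw [this, Bmat, smul_sub, smul_smul, Fintype.card_fin, neg_smul, sub_eq_add_neg]

lemma Bmat_transpose : (Bmat (Fin t))ᵀ = Bmat (Fin t) := by
  have hJ : (Jmat (Fin t))ᵀ = Jmat (Fin t) := by ext; simp [Jmat]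
  simp [Bmat, hJ]

lemma cs_posDef (α β : ℝ) (h1 : 0 < α) (h2 : 0 < α + t * β) :
    (α • (1 : Matrix (Fin t) (Fin t) ℝ) + β • Jmat (Fin t)).PosDef := by
  refine Matrix.PosDef.of_dotProduct_mulVec_pos ?_ fun v hv => ?_
  · have hJ : (Jmat (Fin t))ᵀ = Jmat (Fin t) := by ext; simp [Jmat]
    rw [Matrix.IsHermitian, Matrix.conjTranspose_eq_transpose_of_trivial]
    simp [hJ]
  · rw [star_trivial, cs_quad]
    have hvv : 0 < v ⬝ᵥ v := by simpa using Matrix.dotProduct_star_self_pos_iff.2 hv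
    have hCS : (ov _ ⬝ᵥ v) ^ 2 ≤ t * (v ⬝ᵥ v) := by
      have := sq_sum_le_card_mul_sum_sq (s := Finset.univ) (f := v)
      simpa [ov, dotProduct, pow_two] using this
    rcases le_or_gt 0 β with hβ | hβ
    · nlinarith [mul_pos h1 hvv, mul_nonneg hβ (sq_nonneg (ov _ ⬝ᵥ v))]
    · nlinarith [mul_pos h2 hvv, mul_nonneg (neg_pos.2 hβ).le (sub_nonneg.2 hCS)]

lemma info_aux (ht : 2 ≤ t) (W : Matrix (Plot a b) (Plot a b) ℝ)
    (X Y : BlockArray a b t → Matrix (Plot a b) (Fin t) ℝ) (ξ : BlockArray a b t → ℝ)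
    (hX : ∀ s, X s *ᵥ ov _ = ov _) (hW : ov _ ᵥ* W = 0) (α β : ℝ)
    (h : ∑ s, ξ s • ((X s)ᵀ * W * Y s) =
      α • (1 : Matrix (Fin t) (Fin t) ℝ) + β • Jmat (Fin t)) :
    ∑ s, ξ s • ((X s)ᵀ * W * Y s) = α • Bmat (Fin t) := by
  have e := mix_mulVec W X Y ξ (ov _) (ov _)
  rw [h, cs_quad, ov_ov] at e
  simp only [hX, Matrix.dotProduct_mulVec, hW, zero_dotProduct, mul_zero,
    Finset.sum_const_zero, Matrix.zero_vecMul] at e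
  rw [h]
  apply cs_eq_Bmat ht
  have h0 : (t : ℝ) ≠ 0 := by positivity
  apply mul_left_cancel₀ h0
  linarith

/-- every symmetric measure is pseudo symmetric; and for every pseudo
symmetric measure `ξ`, `C_{ξ11}` is positive definite (hence invertible) and the
information matrix equals `q*_ξ · B_t/(t−1)`. -/
theorem symmetric_pseudoSym_and_infoMat
    (a b t : ℕ) (ha : 2 ≤ a) (hab : a ≤ b) (hb : 3 ≤ b) (ht : 2 ≤ t)
    (Sig : Matrix (Plot a b) (Plot a b) ℝ) (hSig : Sig.PosDef) :
    (∀ ξ : BlockArray a b t → ℝ, IsMeasure ξ → IsSymmetricMeasure ξ →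
       PseudoSym (Btilde Sig) ξ) ∧
    (∀ ξ : BlockArray a b t → ℝ, IsMeasure ξ → PseudoSym (Btilde Sig) ξ →
       (Cm11 (Btilde Sig) ξ).PosDef ∧ IsUnit (Cm11 (Btilde Sig) ξ) ∧
       Cm00 (Btilde Sig) ξ - Cm01 (Btilde Sig) ξ * (Cm11 (Btilde Sig) ξ)⁻¹ *
           (Cm01 (Btilde Sig) ξ)ᵀ
         = (qstar (Btilde Sig) ξ / ((t : ℝ) - 1)) • Bmat (Fin t)) := by

  refine ⟨fun ξ _ hs => ⟨?_, ?_, ?_⟩, fun ξ hξ hP => ?_⟩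
  · exact complSym_mix ht (Btilde Sig) Tmat Tmat Tmat_perm Tmat_perm ξ hs
  · exact complSym_mix ht (Btilde Sig) Tmat Fmat Tmat_perm Fmat_perm ξ hs
  · exact complSym_mix ht (Btilde Sig) Fmat Fmat Fmat_perm Fmat_perm ξ hs
  obtain ⟨⟨α0, β0, h00⟩, ⟨α1, β1, h01⟩, ⟨α2, β2, h11⟩⟩ := hP
  have hW := ov_Btilde ha hb hSig
  have e00 : Cm00 (Btilde Sig) ξ = α0 • Bmat (Fin t) :=
    info_aux ht (Btilde Sig) Tmat Tmat ξ Tmat_ov hW α0 β0 h00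
  have e01 : Cm01 (Btilde Sig) ξ = α1 • Bmat (Fin t) :=
    info_aux ht (Btilde Sig) Tmat Fmat ξ Tmat_ov hW α1 β1 h01
  have htR : (2 : ℝ) ≤ t := by exact_mod_cast ht
  -- the direction of the all-ones vector
  have hsum : 0 < α2 + t * β2 := by
    have h := mix_pos ha hb hSig hξ (ov _) fun s =>
      ⟨(⟨0, by omega⟩, ⟨0, by omega⟩), (⟨0, by omega⟩, ⟨1, by omega⟩), by
        rw [Fmat_ov, deg_corner ha hb, deg_side ha hb]; norm_num⟩
    rw [h11, cs_quad, ov_ov] at h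
    by_contra! hc
    nlinarith
  -- the direction `t e_k - 1`
  have hα : 0 < α2 := by
    let k : Fin t := ⟨0, by omega⟩
    have h := mix_pos ha hb hSig hξ ((t : ℝ) • Pi.single k 1 - ov _) fun s =>
      ⟨(⟨0, by omega⟩, ⟨0, by omega⟩), (⟨0, by omega⟩, ⟨1, by omega⟩), by
        rw [Matrix.mulVec_sub, Matrix.mulVec_smul, Fmat_ov, Matrix.mulVec_single_one]
        simp only [Pi.sub_apply, Pi.smul_apply, Matrix.col_apply, smul_eq_mul]
        rw [deg_corner ha hb, deg_side ha hb]
        obtain ⟨m, hm⟩ := Fmat_nat s (⟨0, by omega⟩, ⟨0, by omega⟩) k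
        obtain ⟨n, hn⟩ := Fmat_nat s (⟨0, by omega⟩, ⟨1, by omega⟩) k
        rw [hm, hn]
        intro hc
        have hc' : (t : ℤ) * (n - m) = 1 := by
          have : (t : ℝ) * (n - m) = 1 := by linarith
          exact_mod_cast this
        have := Int.eq_one_or_neg_one_of_mul_eq_one hc'
        omega⟩
    have i1 : ov (Fin t) ⬝ᵥ ((t : ℝ) • Pi.single k 1 - ov _) = 0 := by
      rw [dotProduct_sub, ov_ov, dotProduct_smul, dotProduct_single_one]
      simp [ov]
    have hge : 0 ≤ ((t : ℝ) • Pi.single k 1 - ov _) ⬝ᵥ ((t : ℝ) • Pi.single k 1 - ov _) :=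
      Finset.sum_nonneg fun i _ => mul_self_nonneg _
    rw [h11, cs_quad, i1] at h
    by_contra! hc
    nlinarith
  have hPD : (Cm11 (Btilde Sig) ξ).PosDef := by
    rw [h11]; exact cs_posDef α2 β2 hα hsum
  refine ⟨hPD, hPD.isUnit, ?_⟩
  have c00 : cm00 (Btilde Sig) ξ = α0 * ((t : ℝ) - 1) := by
    have : cm00 (Btilde Sig) ξ = _ := trace_mix (Cs00 (Btilde Sig)) ξ
    rw [this, show (∑ s, ξ s • Cs00 (Btilde Sig) s) = _ from h00, Bmat_mul_cs ht,
      Matrix.trace_smul, trace_Bmat ht, smul_eq_mul]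
  have c01 : cm01 (Btilde Sig) ξ = α1 * ((t : ℝ) - 1) := by
    have : cm01 (Btilde Sig) ξ = _ := trace_mix (Cs01 (Btilde Sig)) ξ
    rw [this, show (∑ s, ξ s • Cs01 (Btilde Sig) s) = _ from h01, Bmat_mul_cs ht,
      Matrix.trace_smul, trace_Bmat ht, smul_eq_mul]
  have c11 : cm11 (Btilde Sig) ξ = α2 * ((t : ℝ) - 1) := by
    have : cm11 (Btilde Sig) ξ = _ := trace_mix (Cs11 (Btilde Sig)) ξ
    rw [this, show (∑ s, ξ s • Cs11 (Btilde Sig) s) = _ from h11, Bmat_mul_cs ht,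
      Matrix.trace_smul, trace_Bmat ht, smul_eq_mul]
  have hBC : Bmat (Fin t) * Cm11 (Btilde Sig) ξ = α2 • Bmat (Fin t) := by
    rw [h11, Bmat_mul_cs ht]
  have hBinv : Bmat (Fin t) * (Cm11 (Btilde Sig) ξ)⁻¹ = α2⁻¹ • Bmat (Fin t) := by
    have hdet : IsUnit (Cm11 (Btilde Sig) ξ).det :=
      (Matrix.isUnit_iff_isUnit_det _).1 hPD.isUnit
    have := congrArg (fun A => α2⁻¹ • (A * (Cm11 (Btilde Sig) ξ)⁻¹)) hBC
    simp only [Matrix.mul_assoc, Matrix.mul_nonsing_inv _ hdet, Matrix.mul_one,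
      Matrix.smul_mul, smul_smul, inv_mul_cancel₀ hα.ne', one_smul] at this
    exact this.symm
  have hBB : Bmat (Fin t) * Bmat (Fin t) = Bmat (Fin t) := by
    have := Bmat_mul_cs ht 1 (-(t : ℝ)⁻¹)
    rw [one_smul, one_smul] at this
    rwa [neg_smul, ← sub_eq_add_neg, show (1 : Matrix (Fin t) (Fin t) ℝ) -
      (t : ℝ)⁻¹ • Jmat (Fin t) = Bmat (Fin t) by rw [Bmat, Fintype.card_fin]] at this
  rw [e00, e01, qstar, c00, c01, c11, Matrix.smul_mul, hBinv, Matrix.transpose_smul,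
    Bmat_transpose, smul_smul, Matrix.smul_mul, Matrix.mul_smul, hBB, smul_smul, ← sub_smul]
  congr 1
  have ht1 : (t : ℝ) - 1 ≠ 0 := by linarith
  field_simp

end TwoDim
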